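/- Let n ≥ 3 be an integer, g(u) = u - u^(1-4/n) for u > 0, and G(u) = u²/2 - (n/(2n-4)) u^(2-4/n) + 1/(n-2) (so that G' = g and G(1) = 0). If f : ℝ → ℝ is a nonconstant positive periodic solution of f'' - f^(1-4/n) + f = 0, then its constant energy c = (1/2) f'² + G(f) satisfies 0 < c < 1/(n-2). Conversely, for every c with 0 < c < 1/(n-2) there exists a nonconstant positive periodic solution of f'' - f^(1-4/n) + f = 0 with energy c. -/

import Mathlib

open Real

/-- The antiderivative `G(u) = u²/2 - (n/(2n-4)) u^(2-4/n) + 1/(n-2)` of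
`g(u) = u - u^(1-4/n)` vanishing at `u = 1`. -/
noncomputable def derdzG (n : ℕ) (u : ℝ) : ℝ :=
  u ^ 2 / 2 - ((n : ℝ) / (2 * (n : ℝ) - 4)) * u ^ (2 - 4 / (n : ℝ)) + 1 / ((n : ℝ) - 2)

/-!
Write `w = ±√(2 G(u))`, with the sign of `u - z`, for a potential `G` whose only critical point is a
nondegenerate minimum of value `0` at `z`. This is a `C¹` coordinate with positive derivative, even
at `z`, and in the coordinates `(w, f')` the energy level `c` is the circle of radius `√(2 c)`. On
this circle the equation `f'' + G'(f) = 0` moves the polar angle `θ` with the positive speed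
`dw/du`, which is a `2 π`-periodic function of `θ`. Separation of variables therefore yields a
global solution, and it closes up after one turn.

Conversely, a nonconstant periodic function of constant energy `c` attains its minimum and maximum
on the level `{G = c}`, one on each side of `z`. For the normalized equation `z = 1`, and below `1`
the potential takes its values in `(0, 1/(n-2))`.
-/

open Set Filter Topology Function

section ScalarODE

theorem exists_orderIso_of_hasDerivAt_ge {F p : ℝ → ℝ} {m : ℝ} (hF : ∀ x, HasDerivAt F (p x) x)
    (hm : 0 < m) (hmp : ∀ x, m ≤ p x) : ∃ e : ℝ ≃o ℝ, ⇑e = F := by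
  have hmono : Monotone fun x ↦ F x - m * x :=
    monotone_of_hasDerivAt_nonneg (fun x ↦ (hF x).sub ((hasDerivAt_id x).const_mul m))
      fun x ↦ by simpa using hmp x
  have htop : Tendsto F atTop atTop := by
    refine tendsto_atTop_mono' _ ?_ (tendsto_atTop_add_const_left atTop (F 0)
      (tendsto_id.const_mul_atTop hm))
    filter_upwards [eventually_ge_atTop 0] with x hx
    simpa [le_sub_iff_add_le] using hmono hx
  have hbot : Tendsto F atBot atBot := by
    refine tendsto_atBot_mono' _ ?_ (tendsto_atBot_add_const_left atBot (F 0)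
      (tendsto_id.const_mul_atBot hm))
    filter_upwards [eventually_le_atBot 0] with x hx
    simpa [sub_le_iff_le_add] using hmono hx
  have hcont : Continuous F := continuous_iff_continuousAt.2 fun x ↦ (hF x).continuousAt
  exact ⟨(strictMono_of_hasDerivAt_pos hF fun x ↦ hm.trans_le (hmp x)).orderIsoOfSurjective F
    (hcont.surjective htop hbot), rfl⟩

theorem exists_orderIso_hasDerivAt {p : ℝ → ℝ} {m : ℝ} (hp : Continuous p) (hm : 0 < m)
    (hmp : ∀ x, m ≤ p x) (x₀ y₀ : ℝ) :
    ∃ e : ℝ ≃o ℝ, e x₀ = y₀ ∧ ∀ x, HasDerivAt e (p x) x := by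
  have hF (x : ℝ) : HasDerivAt (fun x ↦ y₀ + ∫ t in x₀..x, p t) (p x) x :=
    (hp.integral_hasStrictDerivAt x₀ x).hasDerivAt.const_add y₀
  obtain ⟨e, he⟩ := exists_orderIso_of_hasDerivAt_ge hF hm hmp
  exact ⟨e, by simp [he], he ▸ hF⟩

theorem hasDerivAt_orderIso_symm {e : ℝ ≃o ℝ} {e' y : ℝ} (he : HasDerivAt e e' (e.symm y))
    (he' : e' ≠ 0) : HasDerivAt e.symm e'⁻¹ y :=
  he.of_local_left_inverse e.symm.continuous.continuousAt he' (.of_forall e.apply_symm_apply)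

theorem exists_orderIso_eqOn_Icc_of_hasDerivAt {S σ : ℝ → ℝ} {a b : ℝ} (hab : a ≤ b)
    (hσ : ContinuousOn σ (Icc a b)) (hpos : ∀ x ∈ Icc a b, 0 < σ x)
    (hS : ∀ x ∈ Icc a b, HasDerivAt S (σ x) x) :
    ∃ (e : ℝ ≃o ℝ) (p : ℝ → ℝ), Continuous p ∧ (∀ x, 0 < p x) ∧ (∀ x, HasDerivAt e (p x) x) ∧
      EqOn e S (Icc a b) ∧ EqOn p σ (Icc a b) := by
  set p : ℝ → ℝ := IccExtend hab ((Icc a b).domRestrict σ)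
  have hp : Continuous p := (continuousOn_iff_continuous_domRestrict.1 hσ).Icc_extend'
  have hpσ : EqOn p σ (Icc a b) := fun x hx ↦ IccExtend_of_mem hab _ hx
  obtain ⟨x₀, hx₀, hmin⟩ := isCompact_Icc.exists_isMinOn (nonempty_Icc.2 hab) hσ
  have hmp (x : ℝ) : σ x₀ ≤ p x := hmin (projIcc a b hab x).2
  obtain ⟨e, hea, he⟩ := exists_orderIso_hasDerivAt hp (hpos x₀ hx₀) hmp a (S a)
  refine ⟨e, p, hp, fun x ↦ (hpos x₀ hx₀).trans_le (hmp x), he, fun x hx ↦ ?_, hpσ⟩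
  have hdiff (y) (hy : y ∈ Ico a x) : HasDerivWithinAt (fun y ↦ e y - S y) 0 (Ici y) y := by
    have hy' : y ∈ Icc a b := ⟨hy.1, hy.2.le.trans hx.2⟩
    simpa [hpσ hy'] using ((he y).fun_sub (hS y hy')).hasDerivWithinAt
  have hcont : ContinuousOn (fun y ↦ e y - S y) (Icc a x) := fun y hy ↦
    ((he y).sub (hS y ⟨hy.1, hy.2.trans hx.2⟩)).continuousAt.continuousWithinAt
  have := constant_of_has_deriv_right_zero hcont hdiff x (right_mem_Icc.2 hx.1)
  rw [hea, sub_self] at this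
  exact sub_eq_zero.1 this

-- Separation of variables: `θ` is the inverse of a primitive of `1 / F`.
theorem exists_hasDerivAt_map_add_eq_add {F : ℝ → ℝ} {T : ℝ} (hF : Continuous F)
    (hpos : ∀ φ, 0 < F φ) (hper : Periodic F T) (hT : 0 < T) :
    ∃ θ : ℝ → ℝ, (∀ t, HasDerivAt θ (F (θ t)) t) ∧ ∃ P, 0 < P ∧ ∀ t, θ (t + P) = θ t + T := by
  obtain ⟨_, ⟨φ₀, rfl⟩, hmax⟩ :=
    (hper.compact_of_continuous hT.ne' hF).exists_isGreatest (range_nonempty F)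
  obtain ⟨e, he0, he⟩ := exists_orderIso_hasDerivAt (hF.inv₀ fun φ ↦ (hpos φ).ne')
    (inv_pos.2 (hpos φ₀)) (fun φ ↦ inv_anti₀ (hpos φ) (hmax ⟨φ, rfl⟩)) 0 0
  have hshift (φ : ℝ) : e (φ + T) = e φ + e T := by
    have hd (φ : ℝ) : HasDerivAt (fun φ ↦ e (φ + T) - e φ) 0 φ := by
      simpa [hper φ] using ((he (φ + T)).comp_add_const φ T).fun_sub (he φ)
    have := is_const_of_deriv_eq_zero (fun φ ↦ (hd φ).differentiableAt) (fun φ ↦ (hd φ).deriv) φ 0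
    simp only [zero_add, he0, sub_zero] at this
    linarith
  refine ⟨e.symm, fun t ↦ ?_, e T, he0 ▸ e.strictMono hT, fun t ↦ ?_⟩
  · simpa using hasDerivAt_orderIso_symm (he (e.symm t)) (inv_pos.2 (hpos _)).ne'
  · rw [e.symm_apply_eq, hshift, e.apply_symm_apply]

theorem contDiff_two_of_hasDerivAt {f f' f'' : ℝ → ℝ} (hf : ∀ t, HasDerivAt f (f' t) t)
    (hf' : ∀ t, HasDerivAt f' (f'' t) t) (hf'' : Continuous f'') : ContDiff ℝ 2 f := by
  have hd : deriv f = f' := funext fun t ↦ (hf t).deriv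
  have hd' : deriv f' = f'' := funext fun t ↦ (hf' t).deriv
  rw [← one_add_one_eq_two, contDiff_succ_iff_deriv, hd, contDiff_one_iff_deriv, hd']
  exact ⟨fun t ↦ (hf t).differentiableAt, by simp, fun t ↦ (hf' t).differentiableAt, hf''⟩

end ScalarODE

theorem tendsto_div_sub_sq_of_hasDerivAt {G g : ℝ → ℝ} {z κ : ℝ}
    (hG : ∀ᶠ u in 𝓝 z, HasDerivAt G (g u) u) (hGz : G z = 0) (hgz : g z = 0)
    (hg : HasDerivAt g κ z) : Tendsto (fun u ↦ G u / (u - z) ^ 2) (𝓝[≠] z) (𝓝 (κ / 2)) := by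
  have hne : ∀ᶠ u in 𝓝[≠] z, u - z ≠ 0 :=
    eventually_mem_nhdsWithin.mono fun u hu ↦ sub_ne_zero.2 hu
  refine HasDerivAt.lhopital_zero_nhdsNE (f' := g) (g' := fun u ↦ 2 * (u - z))
    (hG.filter_mono nhdsWithin_le_nhds) (.of_forall fun u ↦ ?_)
    (hne.mono fun u hu ↦ mul_ne_zero two_ne_zero hu) ?_ ?_ ?_
  · simpa using ((hasDerivAt_id u).sub_const z).fun_pow 2
  · exact hGz ▸ hG.self_of_nhds.continuousAt.tendsto.mono_left nhdsWithin_le_nhds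
  · exact tendsto_nhdsWithin_of_tendsto_nhds
      (Continuous.tendsto' (by fun_prop) z 0 (by simp))
  · refine ((hasDerivAt_iff_tendsto_slope.1 hg).div_const 2).congr fun u ↦ ?_
    rw [slope_def_field, hgz, sub_zero, div_div, mul_comm]

/-- `G` is a potential on the open interval `s`, with derivative `g`, that has a nondegenerate
minimum of value `0` at `z` and no other critical point; `κ` is the second derivative of `G` at `z`.
The equation of motion is `f'' + g(f) = 0`, so the actual force is `-g`. -/
structure IsPotentialWell (G g : ℝ → ℝ) (s : Set ℝ) (z κ : ℝ) : Prop where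
  isOpen : IsOpen s
  convex : Convex ℝ s
  center_mem : z ∈ s
  hasDerivAt : ∀ u ∈ s, HasDerivAt G (g u) u
  apply_center : G z = 0
  force_continuousOn : ContinuousOn g s
  force_neg : ∀ u ∈ s, u < z → g u < 0
  force_pos : ∀ u ∈ s, z < u → 0 < g u
  force_hasDerivAt : HasDerivAt g κ z
  stiffness_pos : 0 < κ

/-- The signed root `w` of `w² / 2 = G u`, negative to the left of `z` and positive to its right:
the coordinate that turns the potential `G` with minimum at `z` into a harmonic one. -/
noncomputable def normalCoord (G : ℝ → ℝ) (z u : ℝ) : ℝ :=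
  SignType.sign (u - z) * √(2 * G u)

namespace IsPotentialWell

variable {G g : ℝ → ℝ} {s : Set ℝ} {z κ : ℝ}

theorem continuousOn (h : IsPotentialWell G g s z κ) : ContinuousOn G s := fun u hu ↦
  (h.hasDerivAt u hu).continuousAt.continuousWithinAt

theorem strictAntiOn (h : IsPotentialWell G g s z κ) : StrictAntiOn G (s ∩ Iic z) := by
  refine strictAntiOn_of_deriv_neg (h.convex.inter (convex_Iic z))
    (h.continuousOn.mono inter_subset_left) fun u hu ↦ ?_
  rw [interior_inter, h.isOpen.interior_eq, interior_Iic] at hu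
  exact (h.hasDerivAt u hu.1).deriv ▸ h.force_neg u hu.1 hu.2

theorem strictMonoOn (h : IsPotentialWell G g s z κ) : StrictMonoOn G (s ∩ Ici z) := by
  refine strictMonoOn_of_deriv_pos (h.convex.inter (convex_Ici z))
    (h.continuousOn.mono inter_subset_left) fun u hu ↦ ?_
  rw [interior_inter, h.isOpen.interior_eq, interior_Ici] at hu
  exact (h.hasDerivAt u hu.1).deriv ▸ h.force_pos u hu.1 hu.2

theorem pos_of_ne (h : IsPotentialWell G g s z κ) {u : ℝ} (hu : u ∈ s) (hne : u ≠ z) :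
    0 < G u := by
  rw [← h.apply_center]
  rcases hne.lt_or_gt with hlt | hgt
  · exact h.strictAntiOn ⟨hu, hlt.le⟩ ⟨h.center_mem, self_mem_Iic⟩ hlt
  · exact h.strictMonoOn ⟨h.center_mem, self_mem_Ici⟩ ⟨hu, hgt.le⟩ hgt

theorem nonneg (h : IsPotentialWell G g s z κ) {u : ℝ} (hu : u ∈ s) : 0 ≤ G u := by
  rcases eq_or_ne u z with rfl | hne
  · exact h.apply_center.ge
  · exact (h.pos_of_ne hu hne).le

theorem force_center (h : IsPotentialWell G g s z κ) : g z = 0 :=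
  IsLocalMin.hasDerivAt_eq_zero ((h.isOpen.eventually_mem h.center_mem).mono fun _ hu ↦
    h.apply_center.trans_le (h.nonneg hu)) (h.hasDerivAt z h.center_mem)

theorem force_ne_zero (h : IsPotentialWell G g s z κ) {u : ℝ} (hu : u ∈ s) (hne : u ≠ z) :
    g u ≠ 0 :=
  hne.lt_or_gt.elim (fun hlt ↦ (h.force_neg u hu hlt).ne) fun hgt ↦ (h.force_pos u hu hgt).ne'

end IsPotentialWell

section NormalCoord

variable {G g : ℝ → ℝ} {s : Set ℝ} {z κ : ℝ}

@[simp]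
theorem normalCoord_self (G : ℝ → ℝ) (z : ℝ) : normalCoord G z z = 0 := by simp [normalCoord]

theorem normalCoord_of_lt {u : ℝ} (hu : u < z) : normalCoord G z u = -√(2 * G u) := by
  simp [normalCoord, sign_neg (sub_neg.2 hu)]

theorem normalCoord_of_gt {u : ℝ} (hu : z < u) : normalCoord G z u = √(2 * G u) := by
  simp [normalCoord, sign_pos (sub_pos.2 hu)]

theorem slope_normalCoord (G : ℝ → ℝ) {z u : ℝ} (hu : u ≠ z) :
    slope (normalCoord G z) z u = √(2 * (G u / (u - z) ^ 2)) := by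
  rw [slope_def_field, normalCoord_self, sub_zero, ← mul_div_assoc, sqrt_div' _ (sq_nonneg _),
    sqrt_sq_eq_abs]
  rcases hu.lt_or_gt with hlt | hgt
  · rw [normalCoord_of_lt hlt, abs_of_neg (sub_neg.2 hlt), div_neg, neg_div]
  · rw [normalCoord_of_gt hgt, abs_of_pos (sub_pos.2 hgt)]

namespace IsPotentialWell

theorem normalCoord_sq (h : IsPotentialWell G g s z κ) {u : ℝ} (hu : u ∈ s) :
    normalCoord G z u ^ 2 = 2 * G u := by
  have hG : 0 ≤ 2 * G u := mul_nonneg zero_le_two (h.nonneg hu)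
  rcases lt_trichotomy u z with hlt | rfl | hgt
  · rw [normalCoord_of_lt hlt, neg_sq, sq_sqrt hG]
  · simp [h.apply_center]
  · rw [normalCoord_of_gt hgt, sq_sqrt hG]

theorem normalCoord_ne_zero (h : IsPotentialWell G g s z κ) {u : ℝ} (hu : u ∈ s)
    (hne : u ≠ z) : normalCoord G z u ≠ 0 := by
  rw [← sq_pos_iff, h.normalCoord_sq hu]
  exact mul_pos two_pos (h.pos_of_ne hu hne)

theorem hasDerivAt_normalCoord_of_ne (h : IsPotentialWell G g s z κ) {u : ℝ} (hu : u ∈ s)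
    (hne : u ≠ z) : HasDerivAt (normalCoord G z) (g u / normalCoord G z u) u := by
  have hG : 2 * G u ≠ 0 := (mul_pos two_pos (h.pos_of_ne hu hne)).ne'
  have hsqrt := ((h.hasDerivAt u hu).const_mul 2).sqrt hG
  rw [mul_div_mul_left _ _ two_ne_zero] at hsqrt
  rcases hne.lt_or_gt with hlt | hgt
  · rw [normalCoord_of_lt hlt, div_neg]
    exact hsqrt.neg.congr_of_eventuallyEq ((eventually_lt_nhds hlt).mono fun w hw ↦
      normalCoord_of_lt hw)
  · rw [normalCoord_of_gt hgt]
    exact hsqrt.congr_of_eventuallyEq ((eventually_gt_nhds hgt).mono fun w hw ↦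
      normalCoord_of_gt hw)

theorem hasDerivAt_normalCoord_center (h : IsPotentialWell G g s z κ) :
    HasDerivAt (normalCoord G z) √κ z := by
  have hG := tendsto_div_sub_sq_of_hasDerivAt
    ((h.isOpen.eventually_mem h.center_mem).mono h.hasDerivAt) h.apply_center h.force_center
    h.force_hasDerivAt
  rw [hasDerivAt_iff_tendsto_slope]
  have := (hG.const_mul 2).sqrt
  rw [mul_div_cancel₀ _ two_ne_zero] at this
  exact this.congr' (eventually_mem_nhdsWithin.mono fun u hu ↦ (slope_normalCoord G hu).symm)

theorem hasDerivAt_normalCoord (h : IsPotentialWell G g s z κ) {u : ℝ} (hu : u ∈ s) :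
    HasDerivAt (normalCoord G z) (deriv (normalCoord G z) u) u := by
  rcases eq_or_ne u z with rfl | hne
  · exact h.hasDerivAt_normalCoord_center.differentiableAt.hasDerivAt
  · exact (h.hasDerivAt_normalCoord_of_ne hu hne).differentiableAt.hasDerivAt

theorem normalCoord_mul_deriv (h : IsPotentialWell G g s z κ) {u : ℝ} (hu : u ∈ s) :
    normalCoord G z u * deriv (normalCoord G z) u = g u := by
  rcases eq_or_ne u z with rfl | hne
  · simp [h.force_center]
  · rw [(h.hasDerivAt_normalCoord_of_ne hu hne).deriv,
      mul_div_cancel₀ _ (h.normalCoord_ne_zero hu hne)]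

theorem deriv_normalCoord_pos (h : IsPotentialWell G g s z κ) {u : ℝ} (hu : u ∈ s) :
    0 < deriv (normalCoord G z) u := by
  rcases lt_trichotomy u z with hlt | rfl | hgt
  · rw [(h.hasDerivAt_normalCoord_of_ne hu hlt.ne).deriv, normalCoord_of_lt hlt]
    exact div_pos_of_neg_of_neg (h.force_neg u hu hlt)
      (neg_neg_of_pos (sqrt_pos.2 (mul_pos two_pos (h.pos_of_ne hu hlt.ne))))
  · exact h.hasDerivAt_normalCoord_center.deriv ▸ sqrt_pos.2 h.stiffness_pos
  · rw [(h.hasDerivAt_normalCoord_of_ne hu hgt.ne').deriv, normalCoord_of_gt hgt]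
    exact div_pos (h.force_pos u hu hgt) (sqrt_pos.2 (mul_pos two_pos (h.pos_of_ne hu hgt.ne')))

theorem continuousAt_deriv_normalCoord_center (h : IsPotentialWell G g s z κ) :
    ContinuousAt (deriv (normalCoord G z)) z := by
  have hκ : √κ ≠ 0 := (sqrt_pos.2 h.stiffness_pos).ne'
  have hlim : Tendsto (fun u ↦ slope g z u / slope (normalCoord G z) z u) (𝓝[≠] z) (𝓝 √κ) := by
    simpa [Pi.div_def] using (hasDerivAt_iff_tendsto_slope.1 h.force_hasDerivAt).div
      (hasDerivAt_iff_tendsto_slope.1 h.hasDerivAt_normalCoord_center) hκ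
  rw [continuousAt_iff_punctured_nhds, h.hasDerivAt_normalCoord_center.deriv]
  refine hlim.congr' ?_
  filter_upwards [self_mem_nhdsWithin, nhdsWithin_le_nhds (h.isOpen.mem_nhds h.center_mem)]
    with u hne hu
  rw [(h.hasDerivAt_normalCoord_of_ne hu hne).deriv, slope_def_field, slope_def_field,
    h.force_center, normalCoord_self, sub_zero, sub_zero,
    div_div_div_cancel_right₀ (sub_ne_zero.2 hne)]

theorem continuousOn_deriv_normalCoord (h : IsPotentialWell G g s z κ) :
    ContinuousOn (deriv (normalCoord G z)) s := fun u hu ↦ by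
  refine ContinuousAt.continuousWithinAt ?_
  rcases eq_or_ne u z with rfl | hne
  · exact h.continuousAt_deriv_normalCoord_center
  · refine ContinuousAt.congr ((h.force_continuousOn.continuousAt (h.isOpen.mem_nhds hu)).div
      (h.hasDerivAt_normalCoord hu).continuousAt (h.normalCoord_ne_zero hu hne)) ?_
    filter_upwards [h.isOpen.mem_nhds hu, isOpen_ne.mem_nhds hne] with w hw hwz
    exact (h.hasDerivAt_normalCoord_of_ne hw hwz).deriv.symm

theorem exists_inverse_normalCoord (h : IsPotentialWell G g s z κ) {a b c : ℝ} (ha : a ∈ s)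
    (haz : a < z) (hb : b ∈ s) (hzb : z < b) (hGa : G a = c) (hGb : G b = c) :
    ∃ U q : ℝ → ℝ, Continuous q ∧ (∀ w, 0 < q w) ∧ (∀ w, HasDerivAt U (q w)⁻¹ w) ∧
      ∀ w ∈ Icc (-√(2 * c)) √(2 * c), U w ∈ s ∧ G (U w) = w ^ 2 / 2 ∧ g (U w) = w * q w := by
  have hsub : Icc a b ⊆ s := h.convex.ordConnected.out ha hb
  have hab := (haz.trans hzb).le
  obtain ⟨e, p, hp, hpos, he, heS, hpS⟩ := exists_orderIso_eqOn_Icc_of_hasDerivAt hab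
    (h.continuousOn_deriv_normalCoord.mono hsub) (fun u hu ↦ h.deriv_normalCoord_pos (hsub hu))
    (fun u hu ↦ h.hasDerivAt_normalCoord (hsub hu))
  have hea : e a = -√(2 * c) := by rw [heS (left_mem_Icc.2 hab), normalCoord_of_lt haz, hGa]
  have heb : e b = √(2 * c) := by rw [heS (right_mem_Icc.2 hab), normalCoord_of_gt hzb, hGb]
  refine ⟨e.symm, p ∘ e.symm, hp.comp e.symm.continuous, fun w ↦ hpos _,
    fun w ↦ hasDerivAt_orderIso_symm (he _) (hpos _).ne', fun w hw ↦ ?_⟩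
  have hmem : e.symm w ∈ Icc a b :=
    ⟨e.le_symm_apply.2 (hea.trans_le hw.1), e.symm_apply_le.2 (hw.2.trans_eq heb.symm)⟩
  have hw : normalCoord G z (e.symm w) = w := by rw [← heS hmem, e.apply_symm_apply]
  have hsq := h.normalCoord_sq (hsub hmem)
  have hmul := h.normalCoord_mul_deriv (hsub hmem)
  rw [hw] at hsq hmul
  refine ⟨hsub hmem, by linarith, ?_⟩
  rw [comp_apply, hpS hmem, hmul]

theorem exists_periodic_solution (h : IsPotentialWell G g s z κ) {a b c : ℝ} (ha : a ∈ s)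
    (haz : a < z) (hb : b ∈ s) (hzb : z < b) (hGa : G a = c) (hGb : G b = c) :
    ∃ f v : ℝ → ℝ, (∀ t, HasDerivAt f (v t) t) ∧ (∀ t, HasDerivAt v (-g (f t)) t) ∧
      (∀ t, f t ∈ s) ∧ (∃ P, 0 < P ∧ Periodic f P) ∧ ∀ t, 1 / 2 * v t ^ 2 + G (f t) = c := by
  obtain ⟨U, q, hq, hqpos, hU, hUr⟩ := h.exists_inverse_normalCoord ha haz hb hzb hGa hGb
  set r := √(2 * c)
  have hr : r ^ 2 = 2 * c := sq_sqrt (mul_nonneg zero_le_two (hGa ▸ h.nonneg ha))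
  obtain ⟨θ, hθ, P, hP, hθP⟩ := exists_hasDerivAt_map_add_eq_add (F := fun φ ↦ q (r * sin φ))
    (by fun_prop) (fun φ ↦ hqpos _) (fun φ ↦ by simp [sin_add_two_pi]) two_pi_pos
  have hmem (t : ℝ) : r * sin (θ t) ∈ Icc (-r) r := by
    have hr0 : 0 ≤ r := sqrt_nonneg _
    constructor <;> nlinarith [neg_one_le_sin (θ t), sin_le_one (θ t)]
  choose hs hG hg using fun t ↦ hUr _ (hmem t)
  refine ⟨fun t ↦ U (r * sin (θ t)), fun t ↦ r * cos (θ t), fun t ↦ ?_, fun t ↦ ?_, hs,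
    ⟨P, hP, fun t ↦ by simp [hθP, sin_add_two_pi]⟩, fun t ↦ ?_⟩
  -- `q` is `dw/du`, so the angular speed cancels the derivative of `U` and leaves `r cos θ`.
  · refine ((hU _).comp t ((hθ t).sin.const_mul r)).congr_deriv ?_
    field_simp [(hqpos (r * sin (θ t))).ne']
  · exact ((hθ t).cos.const_mul r).congr_deriv (by rw [hg]; ring)
  · rw [hG]
    linear_combination r ^ 2 / 2 * sin_sq_add_cos_sq (θ t) + hr / 2

theorem not_const_of_energy_ne_zero (h : IsPotentialWell G g s z κ) {f v : ℝ → ℝ} {c : ℝ}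
    (hf : ∀ t, HasDerivAt f (v t) t) (hv : ∀ t, HasDerivAt v (-g (f t)) t) (hs : ∀ t, f t ∈ s)
    (hE : ∀ t, 1 / 2 * v t ^ 2 + G (f t) = c) (hc : c ≠ 0) : ¬∃ d, ∀ t, f t = d := by
  rintro ⟨d, hd⟩
  obtain rfl : f = fun _ ↦ d := funext hd
  obtain rfl : v = fun _ ↦ 0 := funext fun t ↦ (hf t).unique (hasDerivAt_const t d)
  have hgd : g d = 0 := neg_eq_zero.1 ((hv 0).unique (hasDerivAt_const 0 0))
  have hdz : d = z := by_contra fun hne ↦ h.force_ne_zero (hs 0) hne hgd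
  exact hc (by simpa [hdz, h.apply_center] using (hE 0).symm)

theorem exists_turning_points (h : IsPotentialWell G g s z κ) {f v : ℝ → ℝ} {c P : ℝ}
    (hf : ∀ t, HasDerivAt f (v t) t) (hs : ∀ t, f t ∈ s) (hper : Periodic f P) (hP : P ≠ 0)
    (hnc : ¬∃ d, ∀ t, f t = d) (hE : ∀ t, 1 / 2 * v t ^ 2 + G (f t) = c) :
    ∃ a ∈ s, ∃ b ∈ s, a < z ∧ z < b ∧ G a = c ∧ G b = c := by
  have hcont : Continuous f := continuous_iff_continuousAt.2 fun t ↦ (hf t).continuousAt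
  have hcomp := hper.compact_of_continuous hP hcont
  obtain ⟨_, ⟨p, rfl⟩, hmin⟩ := hcomp.exists_isLeast (range_nonempty f)
  obtain ⟨_, ⟨q, rfl⟩, hmax⟩ := hcomp.exists_isGreatest (range_nonempty f)
  have hle (t : ℝ) : f p ≤ f t := hmin ⟨t, rfl⟩
  have hge (t : ℝ) : f t ≤ f q := hmax ⟨t, rfl⟩
  have hGp : G (f p) = c := by
    simpa [IsLocalMin.hasDerivAt_eq_zero (.of_forall hle) (hf p)] using hE p
  have hGq : G (f q) = c := by
    simpa [IsLocalMax.hasDerivAt_eq_zero (.of_forall hge) (hf q)] using hE q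
  have hlt : f p < f q := (hle q).lt_of_ne fun heq ↦
    hnc ⟨f p, fun t ↦ (hge t |>.trans_eq heq.symm).antisymm (hle t)⟩
  refine ⟨f p, hs p, f q, hs q, ?_, ?_, hGp, hGq⟩ <;> by_contra! hz
  · exact (h.strictMonoOn ⟨hs p, hz⟩ ⟨hs q, hz.trans hlt.le⟩ hlt).ne (hGp.trans hGq.symm)
  · exact (h.strictAntiOn ⟨hs p, hlt.le.trans hz⟩ ⟨hs q, hz⟩ hlt).ne (hGq.trans hGp.symm)

end IsPotentialWell

end NormalCoord

section NormalizedEquation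

/-- The potential `G` of the normalized equation, with the dimension replaced by a real parameter
`ν`; `derdzG n` is by definition its value at `ν = n`. -/
noncomputable def normalizedPotential (ν u : ℝ) : ℝ :=
  u ^ 2 / 2 - ν / (2 * ν - 4) * u ^ (2 - 4 / ν) + 1 / (ν - 2)

/-- The function `g` of the normalized equation `f'' + g(f) = 0`, with the dimension replaced by a
real parameter `ν`. -/
noncomputable def normalizedForce (ν u : ℝ) : ℝ :=
  u - u ^ (1 - 4 / ν)

variable {ν u : ℝ}

theorem hasDerivAt_normalizedPotential (hν0 : ν ≠ 0) (hν2 : ν ≠ 2) (hu : u ≠ 0) :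
    HasDerivAt (normalizedPotential ν) (normalizedForce ν u) u := by
  have hν4 : 2 * ν - 4 ≠ 0 := fun h ↦ hν2 (by linarith)
  have hcoef : ν / (2 * ν - 4) * (2 - 4 / ν) = 1 := by
    rw [show 2 - 4 / ν = (2 * ν - 4) / ν by field_simp, div_mul_div_cancel₀ hν4, div_self hν0]
  have hsq : HasDerivAt (fun u : ℝ ↦ u ^ 2 / 2) u u := by
    simpa using ((hasDerivAt_id u).fun_pow 2).div_const 2
  have hrpow := (hasDerivAt_rpow_const (p := 2 - 4 / ν) (.inl hu)).const_mul (ν / (2 * ν - 4))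
  refine ((hsq.sub hrpow).add_const (1 / (ν - 2))).congr_deriv ?_
  rw [← mul_assoc, hcoef, one_mul, normalizedForce, show 2 - 4 / ν - 1 = 1 - 4 / ν by ring]

theorem isPotentialWell_normalizedPotential (hν0 : 0 < ν) (hν2 : ν ≠ 2) :
    IsPotentialWell (normalizedPotential ν) (normalizedForce ν) (Ioi 0) 1 (4 / ν) where
  isOpen := isOpen_Ioi
  convex := convex_Ioi 0
  center_mem := mem_Ioi.2 one_pos
  hasDerivAt u hu := hasDerivAt_normalizedPotential hν0.ne' hν2 (ne_of_gt hu)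
  apply_center := by
    have hsub : ν - 2 ≠ 0 := sub_ne_zero.2 hν2
    rw [normalizedPotential, one_rpow, show 2 * ν - 4 = 2 * (ν - 2) by ring]
    field_simp
    ring
  force_continuousOn := continuousOn_id.sub
    (continuousOn_id.rpow_const fun _ hu ↦ .inl (ne_of_gt hu))
  force_neg u hu hu1 := sub_neg.2 <| by
    simpa using rpow_lt_rpow_of_exponent_gt hu hu1 (sub_lt_self 1 (show 0 < 4 / ν by positivity))
  force_pos u _ hu1 := sub_pos.2 <| by
    simpa using rpow_lt_rpow_of_exponent_lt hu1 (sub_lt_self 1 (show 0 < 4 / ν by positivity))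
  force_hasDerivAt := by
    simpa [normalizedForce] using! (hasDerivAt_id (1 : ℝ)).fun_sub
      (hasDerivAt_rpow_const (p := 1 - 4 / ν) (.inl one_ne_zero))
  stiffness_pos := by positivity

theorem normalizedPotential_eq (hν : ν ≠ 2) (hu : 0 < u) :
    normalizedPotential ν u = 1 / (ν - 2) + u ^ 2 / 2 * (1 - ν / (ν - 2) / u ^ (4 / ν)) := by
  have hν2 : ν - 2 ≠ 0 := sub_ne_zero.2 hν
  rw [normalizedPotential, rpow_sub hu, rpow_two, show 2 * ν - 4 = 2 * (ν - 2) by ring]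
  field_simp
  ring

theorem normalizedPotential_lt (hν : 2 < ν) (hu : 0 < u) (hu1 : u ≤ 1) :
    normalizedPotential ν u < 1 / (ν - 2) := by
  have hpow : u ^ (4 / ν) ≤ 1 := rpow_le_one hu.le hu1 (by positivity)
  have hcoef : 1 < ν / (ν - 2) := (one_lt_div (sub_pos.2 hν)).2 (by linarith)
  have hfac : 1 - ν / (ν - 2) / u ^ (4 / ν) < 0 :=
    sub_neg.2 ((one_lt_div (rpow_pos_of_pos hu _)).2 (hpow.trans_lt hcoef))
  rw [normalizedPotential_eq hν.ne' hu]
  exact add_lt_of_neg_right _ (mul_neg_of_pos_of_neg (by positivity) hfac)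

theorem exists_one_lt_normalizedPotential_eq (hν : 2 < ν) :
    ∃ B, 1 < B ∧ normalizedPotential ν B = 1 / (ν - 2) := by
  have hcoef : 1 < ν / (ν - 2) := (one_lt_div (sub_pos.2 hν)).2 (by linarith)
  have hB : 1 < (ν / (ν - 2)) ^ (4 / ν)⁻¹ := one_lt_rpow hcoef (by positivity)
  refine ⟨_, hB, ?_⟩
  rw [normalizedPotential_eq hν.ne' (one_pos.trans hB),
    rpow_inv_rpow (one_pos.trans hcoef).le (by positivity), div_self (one_pos.trans hcoef).ne']
  ring

theorem two_sub_four_div_pos (hν : 2 < ν) : 0 < 2 - 4 / ν := by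
  rw [sub_pos, div_lt_iff₀ (by positivity)]
  linarith

theorem normalizedPotential_zero (hν : 2 < ν) : normalizedPotential ν 0 = 1 / (ν - 2) := by
  simp [normalizedPotential, zero_rpow (two_sub_four_div_pos hν).ne']

theorem continuous_normalizedPotential (hν : 2 < ν) : Continuous (normalizedPotential ν) := by
  have := continuous_rpow_const (two_sub_four_div_pos hν).le
  unfold normalizedPotential
  fun_prop

theorem exists_turning_points_normalizedPotential (hν : 2 < ν) {c : ℝ} (hc : 0 < c)
    (hc' : c < 1 / (ν - 2)) : ∃ a b, 0 < a ∧ a < 1 ∧ 1 < b ∧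
      normalizedPotential ν a = c ∧ normalizedPotential ν b = c := by
  have hcont := continuous_normalizedPotential hν
  have hG1 : normalizedPotential ν 1 = 0 :=
    (isPotentialWell_normalizedPotential (two_pos.trans hν) hν.ne').apply_center
  obtain ⟨B, hB, hGB⟩ := exists_one_lt_normalizedPotential_eq hν
  obtain ⟨a, ⟨ha0, ha1⟩, hGa⟩ := intermediate_value_Ioo' zero_le_one hcont.continuousOn
    (show c ∈ Ioo _ _ by rw [hG1, normalizedPotential_zero hν]; exact ⟨hc, hc'⟩)
  obtain ⟨b, ⟨hb, _⟩, hGb⟩ := intermediate_value_Ioo hB.le hcont.continuousOn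
    (show c ∈ Ioo _ _ by rw [hG1, hGB]; exact ⟨hc, hc'⟩)
  exact ⟨a, b, ha0, ha1, hb, hGa, hGb⟩

theorem energy_mem_Ioo_of_periodic (hν : 2 < ν) {f : ℝ → ℝ} {c T : ℝ} (hf : Differentiable ℝ f)
    (hpos : ∀ t, 0 < f t) (hper : Periodic f T) (hT : T ≠ 0) (hnc : ¬∃ a, ∀ t, f t = a)
    (hE : ∀ t, 1 / 2 * deriv f t ^ 2 + normalizedPotential ν (f t) = c) :
    0 < c ∧ c < 1 / (ν - 2) := by
  have hwell := isPotentialWell_normalizedPotential (two_pos.trans hν) hν.ne'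
  obtain ⟨a, ha, -, -, ha1, -, rfl, -⟩ := hwell.exists_turning_points
    (fun t ↦ (hf t).hasDerivAt) hpos hper hT hnc hE
  exact ⟨hwell.pos_of_ne ha ha1.ne, normalizedPotential_lt hν ha ha1.le⟩

theorem exists_periodic_solution_of_energy (hν : 2 < ν) {c : ℝ} (hc : 0 < c)
    (hc' : c < 1 / (ν - 2)) :
    ∃ f : ℝ → ℝ, ContDiff ℝ 2 f ∧ (∀ t, 0 < f t) ∧ (∃ T, 0 < T ∧ Periodic f T) ∧
      (¬∃ a, ∀ t, f t = a) ∧ (∀ t, deriv (deriv f) t - f t ^ (1 - 4 / ν) + f t = 0) ∧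
      ∀ t, 1 / 2 * deriv f t ^ 2 + normalizedPotential ν (f t) = c := by
  have hwell := isPotentialWell_normalizedPotential (two_pos.trans hν) hν.ne'
  obtain ⟨a, b, ha, ha1, hb1, hGa, hGb⟩ := exists_turning_points_normalizedPotential hν hc hc'
  obtain ⟨f, v, hf, hv, hpos, hper, hE⟩ := hwell.exists_periodic_solution ha ha1
    (mem_Ioi.2 (one_pos.trans hb1)) hb1 hGa hGb
  have hdf : deriv f = v := funext fun t ↦ (hf t).deriv
  have hfcont : Continuous f := continuous_iff_continuousAt.2 fun t ↦ (hf t).continuousAt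
  refine ⟨f, contDiff_two_of_hasDerivAt hf hv
    (hwell.force_continuousOn.comp_continuous hfcont hpos).neg, hpos, hper,
    hwell.not_const_of_energy_ne_zero hf hv hpos hE hc.ne', fun t ↦ ?_, fun t ↦ ?_⟩
  · rw [hdf, (hv t).deriv, normalizedForce]
    ring
  · rw [hdf, hE t]

theorem normalized_equation_energy_range_general {ν : ℝ} (hν : 2 < ν) :
    (∀ (f : ℝ → ℝ) (c : ℝ),
      Differentiable ℝ f →
      (∀ t, 0 < f t) →
      (∃ T : ℝ, 0 < T ∧ Periodic f T) →
      (¬ ∃ a : ℝ, ∀ t, f t = a) →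
      (∀ t, (1 / 2) * (deriv f t) ^ 2 + normalizedPotential ν (f t) = c) →
      0 < c ∧ c < 1 / (ν - 2)) ∧
    (∀ c : ℝ, 0 < c → c < 1 / (ν - 2) →
      ∃ f : ℝ → ℝ,
        ContDiff ℝ 2 f ∧
        (∀ t, 0 < f t) ∧
        (∃ T : ℝ, 0 < T ∧ Periodic f T) ∧
        (¬ ∃ a : ℝ, ∀ t, f t = a) ∧
        (∀ t, deriv (deriv f) t - f t ^ (1 - 4 / ν) + f t = 0) ∧
        (∀ t, (1 / 2) * (deriv f t) ^ 2 + normalizedPotential ν (f t) = c)) :=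
  ⟨fun _ _ hf hpos ⟨_, hT, hper⟩ hnc hE ↦ energy_mem_Ioo_of_periodic hν hf hpos hper hT.ne' hnc hE,
    fun _ hc hc' ↦ exists_periodic_solution_of_energy hν hc hc'⟩

end NormalizedEquation

/-- A nonconstant positive periodic solution of `f'' - f^(1-4/n) + f = 0`
has constant energy `c = (1/2) f'² + G(f)` with `0 < c < 1/(n-2)`; conversely every such
`c` is the energy of some nonconstant positive periodic solution. -/
theorem normalized_equation_energy_range (n : ℕ) (hn : 3 ≤ n) :
    (∀ (f : ℝ → ℝ) (c : ℝ),
      ContDiff ℝ 2 f →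
      (∀ t, 0 < f t) →
      (∃ T : ℝ, 0 < T ∧ Function.Periodic f T) →
      (¬ ∃ a : ℝ, ∀ t, f t = a) →
      (∀ t, deriv (deriv f) t - f t ^ (1 - 4 / (n : ℝ)) + f t = 0) →
      (∀ t, (1 / 2) * (deriv f t) ^ 2 + derdzG n (f t) = c) →
      0 < c ∧ c < 1 / ((n : ℝ) - 2)) ∧
    (∀ c : ℝ, 0 < c → c < 1 / ((n : ℝ) - 2) →
      ∃ f : ℝ → ℝ,
        ContDiff ℝ 2 f ∧
        (∀ t, 0 < f t) ∧
        (∃ T : ℝ, 0 < T ∧ Function.Periodic f T) ∧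
        (¬ ∃ a : ℝ, ∀ t, f t = a) ∧
        (∀ t, deriv (deriv f) t - f t ^ (1 - 4 / (n : ℝ)) + f t = 0) ∧
        (∀ t, (1 / 2) * (deriv f t) ^ 2 + derdzG n (f t) = c)) := by
  obtain ⟨hrange, hexists⟩ := normalized_equation_energy_range_general
    (ν := n) (by exact_mod_cast hn)
  exact ⟨fun f c hf hpos hper hnc _ ↦ hrange f c (hf.differentiable two_ne_zero) hpos hper hnc,
    hexists⟩
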